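/- arXiv:1711.01364 — 2 statements merged into one kernel-verified Lean document; each statement's English description precedes it below -/
import Mathlib

section
/- Let G = (V, E, w_G) be a weighted directed graph with non-negative integer edge weights, let s ∈ V be a source node, and let h be an integer with 1 ≤ h ≤ |V|. Let C be a skeleton set for (G, s, h), let d̃ : C × V → ℕ∞ satisfy dist_G(x, v) ≤ d̃(x, v) ≤ 2·dist_G^h(x, v) for every x ∈ C and every v ∈ V, and let H and G' be the skeleton graph and the augmented graph built from C and d̃. Then for every node v ∈ V, dist_G(s, v) ≤ dist_{G'}(s, v) ≤ 2·dist_G(s, v). -/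
/-!
A potential `D` with `D a ≤ w (a, b) + D b` on every edge satisfies `D u ≤ w(p) + D v` for each
walk `p` from `u` to `v` (`le_walkWeight_add`). Applied to distances this gives the triangle
inequality, and then the comparison principle `gdist_le_walkWeight` / `gdist_le_gdist`: if every
edge of a graph `F` weighs at least the `G`-distance of its endpoints, so does every walk of `F`.

Lower bound: the edges of the skeleton graph `H` weigh `d̃ ≥ dist_G`, so `dist_G ≤ dist_H`;
consequently every edge of the augmented graph also weighs at least the `G`-distance of its
endpoints, and `dist_G ≤ dist_{G'}`.

Upper bound: every edge `e` of `G` is an edge of `G'` with weight at most `2 * w_G e`, so each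
walk of `G` is a walk of `G'` of at most twice the weight.
-/

open scoped ENat ENNReal

section SSSP

variable {V : Type*}

/-- A walk (path) from `u` to `v` in the directed graph with edge set `E`:
a nonempty list of nodes starting at `u`, ending at `v`, with consecutive pairs in `E`. -/
def IsWalk (E : Set (V × V)) (u v : V) (p : List V) : Prop :=
  p ≠ [] ∧ p.head? = some u ∧ p.getLast? = some v ∧ p.Chain' (fun a b => (a, b) ∈ E)

/-- The weight of a walk: the sum of the weights of its edges. -/
def walkWeight (w : V × V → ℕ∞) (p : List V) : ℕ∞ :=
  ((p.zip p.tail).map w).sum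

/-- The distance from `u` to `v`: the minimum weight of a walk from `u` to `v`
(`⊤` if none exists; it is `0` for `u = v` via the single-node walk). -/
noncomputable def gdist (E : Set (V × V)) (w : V × V → ℕ∞) (u v : V) : ℕ∞ :=
  sInf {c | ∃ p, IsWalk E u v p ∧ walkWeight w p = c}

/-- The `h`-hop distance: the minimum weight of a walk from `u` to `v`
with at most `h` edges (i.e. at most `h + 1` nodes); `⊤` if none exists. -/
noncomputable def hdist (E : Set (V × V)) (w : V × V → ℕ∞) (h : ℕ) (u v : V) : ℕ∞ :=
  sInf {c | ∃ p, IsWalk E u v p ∧ p.length ≤ h + 1 ∧ walkWeight w p = c}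

/-- `C ⊆ V` is a skeleton set for `(G, s, h)`: it contains `s`, and for every pair
`u, v` such that some shortest path from `u` to `v` consists of exactly `⌈h/2⌉` nodes,
there is a shortest path from `u` to `v` with exactly `⌈h/2⌉` nodes containing a node of `C`. -/
def IsSkeleton (E : Set (V × V)) (w : V × V → ℕ∞) (s : V) (h : ℕ) (C : Set V) : Prop :=
  s ∈ C ∧ ∀ u v : V,
    (∃ p, IsWalk E u v p ∧ walkWeight w p = gdist E w u v ∧ p.length = (h + 1) / 2) →
    ∃ p, IsWalk E u v p ∧ walkWeight w p = gdist E w u v ∧ p.length = (h + 1) / 2 ∧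
      ∃ x ∈ C, x ∈ p

end SSSP

section Helpers

variable {V : Type*} {E : Set (V × V)} {w : V × V → ℕ∞}

lemma IsWalk.gdist_le {u v : V} {p : List V} (hp : IsWalk E u v p) :
    gdist E w u v ≤ walkWeight w p :=
  sInf_le ⟨p, hp, rfl⟩

lemma gdist_self (u : V) : gdist E w u u = 0 := by
  have hp : IsWalk E u u [u] := ⟨by simp, by simp, by simp, List.isChain_singleton u⟩
  simpa [walkWeight] using hp.gdist_le (w := w)

/-- Unless no walk exists, the distance is attained by some walk. -/
lemma gdist_eq_top_or_exists (E : Set (V × V)) (w : V × V → ℕ∞) (u v : V) :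
    gdist E w u v = ⊤ ∨ ∃ p, IsWalk E u v p ∧ walkWeight w p = gdist E w u v := by
  rcases Set.eq_empty_or_nonempty {c | ∃ p, IsWalk E u v p ∧ walkWeight w p = c} with h | h
  · left
    rw [gdist, h, sInf_empty]
  · right
    exact csInf_mem h

lemma gdist_le_edge_add {a b : V} (hab : (a, b) ∈ E) (v : V) :
    gdist E w a v ≤ w (a, b) + gdist E w b v := by
  rcases gdist_eq_top_or_exists E w b v with h | ⟨p, ⟨hne, hh, hl, hc⟩, hw⟩
  · simp [h]
  · obtain ⟨q, rfl⟩ : ∃ q, p = b :: q := by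
      cases p with
      | nil => exact absurd rfl hne
      | cons x q => exact ⟨q, by simpa using hh⟩
    have hp : IsWalk E a v (a :: b :: q) :=
      ⟨by simp, by simp, by simpa using hl, List.isChain_cons_cons.2 ⟨hab, hc⟩⟩
    rw [← hw]
    simpa [walkWeight] using hp.gdist_le (w := w)

/-- A potential that drops by at most the edge weight along each edge drops by at most the walk
weight along each walk. -/
lemma le_walkWeight_add {D : V → ℕ∞} (hD : ∀ a b, (a, b) ∈ E → D a ≤ w (a, b) + D b)
    {u v : V} {p : List V} (hp : IsWalk E u v p) : D u ≤ walkWeight w p + D v := by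
  obtain ⟨hne, hh, hl, hc⟩ := hp
  induction p generalizing u with
  | nil => exact absurd rfl hne
  | cons x q ih =>
    obtain rfl : x = u := by simpa using hh
    cases q with
    | nil =>
      obtain rfl : x = v := by simpa using hl
      simp [walkWeight]
    | cons y r =>
      obtain ⟨hxy, hc'⟩ := List.isChain_cons_cons.1 hc
      have h1 := ih (u := y) (by simp) (by simp) (by simpa using hl) hc'
      calc D x ≤ w (x, y) + D y := hD x y hxy
        _ ≤ w (x, y) + (walkWeight w (y :: r) + D v) := by gcongr
        _ = walkWeight w (x :: y :: r) + D v := by simp [walkWeight, add_assoc]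

lemma gdist_triangle (u v x : V) : gdist E w u x ≤ gdist E w u v + gdist E w v x := by
  rcases gdist_eq_top_or_exists E w u v with h | ⟨p, hp, hw⟩
  · simp [h]
  · rw [← hw]
    exact le_walkWeight_add (D := fun a => gdist E w a x)
      (fun a b hab => gdist_le_edge_add hab x) hp

lemma gdist_le_edge {a b : V} (hab : (a, b) ∈ E) : gdist E w a b ≤ w (a, b) := by
  simpa [gdist_self] using gdist_le_edge_add (w := w) hab b

/-- If the edges of one graph weigh at least the distance of their endpoints in another, then
walks of the former weigh at least the distance of their endpoints in the latter. -/
lemma gdist_le_walkWeight {F : Set (V × V)} {w' : V × V → ℕ∞}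
    (hF : ∀ a b, (a, b) ∈ F → gdist E w a b ≤ w' (a, b))
    {u v : V} {p : List V} (hp : IsWalk F u v p) : gdist E w u v ≤ walkWeight w' p := by
  have h := le_walkWeight_add (w := w') (D := fun a => gdist E w a v)
    (fun a b hab => (gdist_triangle a b v).trans (by gcongr; exact hF a b hab)) hp
  simpa [gdist_self] using h

lemma gdist_le_gdist {F : Set (V × V)} {w' : V × V → ℕ∞}
    (hF : ∀ a b, (a, b) ∈ F → gdist E w a b ≤ w' (a, b)) (u v : V) :
    gdist E w u v ≤ gdist F w' u v := by
  refine le_sInf ?_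
  rintro c ⟨p, hp, rfl⟩
  exact gdist_le_walkWeight hF hp

lemma walkWeight_two_mul (p : List V) :
    walkWeight (fun e => 2 * w e) p = 2 * walkWeight w p := by
  simp [walkWeight, List.sum_map_mul_left]

end Helpers

/-- For a weighted directed graph `G = (V, E, w_G)` with non-negative
integer edge weights, source `s`, `1 ≤ h ≤ |V|`, a skeleton set `C`, estimates `d̃` with
`dist_G(x,v) ≤ d̃(x,v) ≤ 2·dist_G^h(x,v)` for `x ∈ C`, skeleton graph `H = (C, C×C, w_H)`
with `w_H(x,y) = d̃(x,y)`, and augmented graph `G' = (V, E ∪ {s}×C, w_{G'})` as described,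
every node `v` satisfies `dist_G(s,v) ≤ dist_{G'}(s,v) ≤ 2·dist_G(s,v)`. -/
theorem skeleton_augmented_graph_two_approximation
    {V : Type*} [Fintype V]
    (E : Set (V × V)) (wG : V × V → ℕ) (s : V) (h : ℕ)
    (hh1 : 1 ≤ h) (hh2 : h ≤ Fintype.card V)
    (C : Set V) (hC : IsSkeleton E (fun e => (wG e : ℕ∞)) s h C)
    (dtil : V → V → ℕ∞)
    (hdtil : ∀ x ∈ C, ∀ v : V,
      gdist E (fun e => (wG e : ℕ∞)) x v ≤ dtil x v ∧
      dtil x v ≤ 2 * hdist E (fun e => (wG e : ℕ∞)) h x v)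
    -- the skeleton graph `H = (C, C × C, w_H)`
    (EH : Set (V × V)) (hEH : EH = C ×ˢ C)
    (wH : V × V → ℕ∞) (hwH : ∀ e ∈ EH, wH e = dtil e.1 e.2)
    -- the augmented graph `G' = (V, E ∪ {s} × C, w_{G'})`
    (E' : Set (V × V)) (hE' : E' = E ∪ ({s} : Set V) ×ˢ C)
    (wG' : V × V → ℕ∞)
    (hw1 : ∀ e ∈ E, e ∉ ({s} : Set V) ×ˢ C → wG' e = 2 * (wG e : ℕ∞))
    (hw2 : ∀ e ∉ E, e ∈ ({s} : Set V) ×ˢ C → wG' e = gdist EH wH e.1 e.2)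
    (hw3 : ∀ e ∈ E, e ∈ ({s} : Set V) ×ˢ C →
      wG' e = min (gdist EH wH e.1 e.2) (2 * (wG e : ℕ∞))) :
    ∀ v : V,
      gdist E (fun e => (wG e : ℕ∞)) s v ≤ gdist E' wG' s v ∧
      gdist E' wG' s v ≤ 2 * gdist E (fun e => (wG e : ℕ∞)) s v := by
  intro v
  subst hEH hE'
  have hGH : ∀ x y, gdist E (fun e => (wG e : ℕ∞)) x y ≤ gdist (C ×ˢ C) wH x y :=
    gdist_le_gdist fun a b hab => by
      rw [hwH _ hab]
      exact (hdtil a hab.1 b).1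
  have hG2 : ∀ a b, (a, b) ∈ E →
      gdist E (fun e => (wG e : ℕ∞)) a b ≤ 2 * (wG (a, b) : ℕ∞) := fun a b hab =>
    (gdist_le_edge hab).trans (le_mul_of_one_le_left zero_le one_le_two)
  constructor
  · refine gdist_le_gdist (fun a b hab => ?_) s v
    by_cases hE : (a, b) ∈ E <;> by_cases hS : (a, b) ∈ ({s} : Set V) ×ˢ C
    · rw [hw3 _ hE hS]
      exact le_min (hGH a b) (hG2 a b hE)
    · rw [hw1 _ hE hS]
      exact hG2 a b hE
    · rw [hw2 _ hE hS]
      exact hGH a b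
    · exact absurd hab (by simp only [Set.mem_union, hE, hS, or_self, not_false_eq_true])
  · rcases gdist_eq_top_or_exists E (fun e => (wG e : ℕ∞)) s v with h0 | ⟨p, hp, hw⟩
    · simp [h0]
    · rw [← hw, ← walkWeight_two_mul]
      refine gdist_le_walkWeight (fun a b hab => ?_) hp
      refine (gdist_le_edge (Or.inl hab)).trans ?_
      by_cases hS : (a, b) ∈ ({s} : Set V) ×ˢ C
      · rw [hw3 _ hab hS]
        exact min_le_right _ _
      · exact (hw1 _ hab hS).le
end

section
/- Let G = (V, E, w_G) be a weighted directed graph with non-negative integer edge weights, let s ∈ V be a source node, and let h be an integer with 1 ≤ h ≤ |V|. Let C be a skeleton set for (G, s, h), let d̃ : C × V → ℕ∞ satisfy dist_G(x, v) ≤ d̃(x, v) ≤ 2·dist_G^h(x, v) for every x ∈ C and every v ∈ V, and let H and G' be the skeleton graph and the augmented graph built from C and d̃. Then for every node v ∈ V, dist_{G'}^h(s, v) = dist_{G'}(s, v), i.e., the h-hop distance from s to v in the augmented graph G' equals the (unrestricted) distance from s to v in G'. -/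
/-!
Among the walks of weight `dist_{G'}(s, v)` from `s` to `v` in the augmented graph, take one with
the fewest edges, and suppose it has more than `h` of them. It never returns to `s`, since the part
before a return could be dropped. Hence, if `(s, a)` is its first edge, the remainder is a walk from
`a` to `v` in `G` whose weight is doubled in `G'`, and this remainder is a shortest `a`-`v` walk
in `G` because every edge of `G` costs in `G'` at most twice its weight in `G`.

By the skeleton property (`exists_skeleton_split`), any window of `⌈h/2⌉` consecutive nodes of the
remainder may be rerouted through a node `x ∈ C` without changing the weight or the number of edges.

* If `a ∈ C` and the first edge costs at least `dist_H(s, a)`, use the window that starts at the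
  second node of the remainder. Then `dist_H(s, x) ≤ dist_H(s, a) + d̃(a, x)` and `d̃(a, x)` is at most
  twice the weight of the part from `a` to `x`, which has at most `h` edges. So the single edge
  `(s, x)` replaces at least two edges at no extra cost, contradicting minimality.
* Otherwise the first edge is an edge of `G` at doubled weight. Use the window that starts at `a`:
  `dist_H(s, x) ≤ d̃(s, x)` is at most twice the weight of the part from `s` to `x`. Either `x` comes
  after `a` and the edge `(s, x)` shortens the walk, or `x = a` and the first case applies.

The list-based walks are handled through the inductive predicate `WalkOf`, which records the number
of edges and the weight.
-/

open scoped ENat ENNReal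

/-! ### Walks with a given number of edges and weight -/

/-- `WalkOf E w u v n c`: there is a walk from `u` to `v` with exactly `n` edges and weight `c`. -/
inductive WalkOf {V : Type*} (E : Set (V × V)) (w : V × V → ℕ∞) : V → V → ℕ → ℕ∞ → Prop
  | nil (u : V) : WalkOf E w u u 0 0
  | cons {a b v : V} {n : ℕ} {c : ℕ∞} (hab : (a, b) ∈ E) (hw : WalkOf E w b v n c) :
      WalkOf E w a v (n + 1) (w (a, b) + c)

section WalkOf

variable {V : Type*} {E : Set (V × V)} {w : V × V → ℕ∞}

theorem WalkOf.single {a b : V} (hab : (a, b) ∈ E) : WalkOf E w a b 1 (w (a, b)) := by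
  simpa using WalkOf.cons (w := w) hab (WalkOf.nil b)

theorem WalkOf.append {u x v : V} {n m : ℕ} {c d : ℕ∞} (h1 : WalkOf E w u x n c)
    (h2 : WalkOf E w x v m d) : WalkOf E w u v (n + m) (c + d) := by
  induction h1 with
  | nil => simpa using h2
  | cons hab _ ih =>
    have := WalkOf.cons hab (ih h2)
    convert this using 1
    · omega
    · rw [add_assoc]

theorem WalkOf.split {u v : V} {i j : ℕ} {c : ℕ∞} (hW : WalkOf E w u v (i + j) c) :
    ∃ x c1 c2, WalkOf E w u x i c1 ∧ WalkOf E w x v j c2 ∧ c = c1 + c2 := by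
  induction i generalizing u c with
  | zero => exact ⟨u, 0, c, .nil u, by simpa using hW, by simp⟩
  | succ i ih =>
    rw [show i + 1 + j = (i + j) + 1 by omega] at hW
    cases hW with
    | cons hab hw =>
      obtain ⟨x, c1, c2, h1, h2, rfl⟩ := ih hw
      exact ⟨x, _, c2, .cons hab h1, h2, by rw [add_assoc]⟩

theorem WalkOf.exists_list {u v : V} {n : ℕ} {c : ℕ∞} (hW : WalkOf E w u v n c) :
    ∃ p, IsWalk E u v p ∧ p.length = n + 1 ∧ walkWeight w p = c := by
  induction hW with
  | nil u => exact ⟨[u], ⟨by simp, by simp, by simp, List.isChain_singleton u⟩, by simp,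
      by simp [walkWeight]⟩
  | @cons a b v n c hab _ ih =>
    obtain ⟨p, ⟨_, hhead, hlast, hchain⟩, hl, hweight⟩ := ih
    match p, hhead with
    | x :: q, hhead =>
      obtain rfl : x = b := by simpa using hhead
      refine ⟨a :: x :: q, ⟨by simp, by simp, ?_, ?_⟩, by simpa using hl, ?_⟩
      · simpa [List.getLast?_cons_cons] using hlast
      · exact List.isChain_cons_cons.2 ⟨hab, hchain⟩
      · rw [← hweight]; simp [walkWeight]

theorem WalkOf.of_list {u v : V} {p : List V} (hp : IsWalk E u v p) :
    ∃ n, WalkOf E w u v n (walkWeight w p) ∧ n + 1 = p.length := by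
  induction p generalizing u with
  | nil => exact absurd rfl hp.1
  | cons a q ih =>
    obtain ⟨_, hhead, hlast, hchain⟩ := hp
    obtain rfl : a = u := by simpa using hhead
    match q with
    | [] =>
      obtain rfl : a = v := by simpa using hlast
      exact ⟨0, by simpa [walkWeight] using WalkOf.nil a, by simp⟩
    | b :: r =>
      obtain ⟨hab, hchain⟩ := List.isChain_cons_cons.1 hchain
      obtain ⟨n, hn, hl⟩ := ih (u := b)
        ⟨by simp, by simp, by simpa [List.getLast?_cons_cons] using hlast, hchain⟩
      have hweight : walkWeight w (a :: b :: r) = w (a, b) + walkWeight w (b :: r) := by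
        simp [walkWeight]
      exact ⟨n + 1, hweight ▸ .cons hab hn, by simp at hl ⊢; omega⟩

/-- A list walk can be cut at any of its nodes. -/
theorem WalkOf.of_list_mem {u v x : V} {p : List V} (hp : IsWalk E u v p) (hx : x ∈ p) :
    ∃ i j c1 c2, WalkOf E w u x i c1 ∧ WalkOf E w x v j c2 ∧ i + j + 1 = p.length ∧
      c1 + c2 = walkWeight w p := by
  induction p generalizing u with
  | nil => simp at hx
  | cons a q ih =>
    have hp0 := hp
    obtain ⟨_, hhead, hlast, hchain⟩ := hp
    obtain rfl : a = u := by simpa using hhead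
    rcases List.mem_cons.1 hx with rfl | hx
    · obtain ⟨n, hn, hl⟩ := WalkOf.of_list (w := w) hp0
      exact ⟨0, n, 0, _, .nil x, hn, by omega, by simp⟩
    · match q with
      | [] => simp at hx
      | b :: r =>
        obtain ⟨hab, hchain⟩ := List.isChain_cons_cons.1 hchain
        obtain ⟨i, j, c1, c2, h1, h2, hl, hc⟩ := ih (u := b)
          ⟨by simp, by simp, by simpa [List.getLast?_cons_cons] using hlast, hchain⟩ hx
        have hweight : walkWeight w (a :: b :: r) = w (a, b) + walkWeight w (b :: r) := by
          simp [walkWeight]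
        exact ⟨i + 1, j, _, c2, .cons hab h1, h2, by simp at hl ⊢; omega, by
          rw [hweight, ← hc, add_assoc]⟩

/-! ### Distances and walks -/

theorem WalkOf.gdist_le {u v : V} {n : ℕ} {c : ℕ∞} (hW : WalkOf E w u v n c) :
    gdist E w u v ≤ c := by
  obtain ⟨p, hp, _, hc⟩ := hW.exists_list
  exact sInf_le ⟨p, hp, hc⟩

theorem WalkOf.hdist_le {u v : V} {n h : ℕ} {c : ℕ∞} (hW : WalkOf E w u v n c) (hn : n ≤ h) :
    hdist E w h u v ≤ c := by
  obtain ⟨p, hp, hl, hc⟩ := hW.exists_list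
  exact sInf_le ⟨p, hp, by omega, hc⟩

theorem exists_walkOf_gdist {u v : V} (hfin : gdist E w u v ≠ ⊤) :
    ∃ n, WalkOf E w u v n (gdist E w u v) := by
  have hne : {c | ∃ p, IsWalk E u v p ∧ walkWeight w p = c}.Nonempty := by
    by_contra hempty
    rw [Set.not_nonempty_iff_eq_empty] at hempty
    exact hfin (by rw [gdist, hempty, sInf_empty])
  obtain ⟨p, hp, hc⟩ := csInf_mem hne
  obtain ⟨n, hn, _⟩ := WalkOf.of_list (w := w) hp
  exact ⟨n, by rw [gdist, ← hc]; exact hn⟩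

theorem gdist_le_add {u x v : V} (hxv : (x, v) ∈ E) :
    gdist E w u v ≤ gdist E w u x + w (x, v) := by
  by_cases hfin : gdist E w u x = ⊤
  · simp [hfin]
  · obtain ⟨n, hn⟩ := exists_walkOf_gdist hfin
    exact (hn.append (.single hxv)).gdist_le

theorem gdist_le_hdist (h : ℕ) (u v : V) : gdist E w u v ≤ hdist E w h u v :=
  sInf_le_sInf fun _ ⟨p, hp, _, hc⟩ => ⟨p, hp, hc⟩

/-! ### Comparison of two graphs and rerouting through the skeleton -/

theorem WalkOf.double {E' : Set (V × V)} {w' : V × V → ℕ∞}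
    (hE : ∀ e ∈ E, e ∈ E' ∧ w' e ≤ 2 * w e) {u v : V} {n : ℕ} {c : ℕ∞}
    (hW : WalkOf E w u v n c) : ∃ c', WalkOf E' w' u v n c' ∧ c' ≤ 2 * c := by
  induction hW with
  | nil u => exact ⟨0, .nil u, by simp⟩
  | cons hab _ ih =>
    obtain ⟨c', h1, h2⟩ := ih
    exact ⟨_, .cons (hE _ hab).1 h1, by rw [mul_add]; exact add_le_add (hE _ hab).2 h2⟩

/-- A walk in the augmented graph either visits `s`, in which case its part from `s` on is a walk
from `s` of no larger length and weight, or it is a walk of the original graph at doubled weight. -/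
theorem WalkOf.visits_or_double {E' : Set (V × V)} {w' : V × V → ℕ∞} {s : V}
    (hE : ∀ a b, a ≠ s → (a, b) ∈ E' → (a, b) ∈ E ∧ w' (a, b) = 2 * w (a, b))
    {u v : V} {n : ℕ} {c : ℕ∞} (hW : WalkOf E' w' u v n c) :
    (∃ m d, m ≤ n ∧ d ≤ c ∧ WalkOf E' w' s v m d) ∨
      ∃ c0, WalkOf E w u v n c0 ∧ c = 2 * c0 := by
  induction hW with
  | nil u => exact .inr ⟨0, .nil u, by simp⟩
  | @cons a b v n c hab hw ih =>
    by_cases has : a = s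
    · subst has
      exact .inl ⟨_, _, le_rfl, le_rfl, .cons hab hw⟩
    · rcases ih with ⟨m, d, hm, hd, hW⟩ | ⟨c0, hW, rfl⟩
      · exact .inl ⟨m, d, by omega, hd.trans le_add_self, hW⟩
      · obtain ⟨h1, h2⟩ := hE a b has hab
        exact .inr ⟨_, .cons h1 hW, by rw [h2, mul_add]⟩

/-- Let a shortest walk from `a` to `v` with `N` edges be given. The window of `⌈h/2⌉` nodes that
starts at its node number `i` (counted from `0`) can be rerouted through a node of the
skeleton set, keeping both the weight and the number of edges of the walk. -/
theorem exists_skeleton_split {s : V} {h : ℕ} {C : Set V} (hh1 : 1 ≤ h)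
    (hC : IsSkeleton E w s h C) {a v : V} {N i : ℕ} {c0 : ℕ∞} (hW : WalkOf E w a v N c0)
    (hfin : c0 ≠ ⊤) (hmin : c0 ≤ gdist E w a v) (hi : i + ((h + 1) / 2 - 1) ≤ N) :
    ∃ x ∈ C, ∃ p q e1 e2, WalkOf E w a x p e1 ∧ WalkOf E w x v q e2 ∧ p + q = N ∧
      i ≤ p ∧ p ≤ i + ((h + 1) / 2 - 1) ∧ e1 + e2 = c0 := by
  obtain ⟨k, hk⟩ : ∃ k, (h + 1) / 2 = k + 1 := ⟨(h + 1) / 2 - 1, by omega⟩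
  simp only [hk, Nat.add_sub_cancel] at hi ⊢
  obtain ⟨r, rfl⟩ := Nat.exists_eq_add_of_le hi
  rw [add_assoc] at hW
  obtain ⟨u, c1, cr, h1, hrest, rfl⟩ := hW.split
  obtain ⟨u', c2, c3, h2, h3, rfl⟩ := hrest.split
  -- the window is itself a shortest walk
  have hc2 : c2 = gdist E w u u' := by
    refine le_antisymm ?_ h2.gdist_le
    obtain ⟨n, hn⟩ := exists_walkOf_gdist (E := E) (w := w) (u := u) (v := u')
      (fun htop => by
        have := h2.gdist_le
        rw [htop, top_le_iff] at this
        exact hfin (by simp [this]))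
    have hle := hmin.trans (h1.append (hn.append h3)).gdist_le
    have hf1 : c1 ≠ ⊤ := fun ht => hfin (by simp [ht])
    have hf3 : c3 ≠ ⊤ := fun ht => hfin (by simp [ht])
    exact (ENat.add_le_add_iff_right hf3).1 ((ENat.add_le_add_iff_left hf1).1 hle)
  obtain ⟨p, hp, hl, hc⟩ := h2.exists_list
  obtain ⟨p', hp', hc', hl', x, hxC, hxp⟩ := hC.2 u u' ⟨p, hp, hc.trans hc2, by omega⟩
  obtain ⟨i', j', d1, d2, g1, g2, hlen, hd⟩ := WalkOf.of_list_mem (w := w) hp' hxp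
  refine ⟨x, hxC, _, _, _, _, h1.append g1, g2.append h3, by omega, by omega, by omega, ?_⟩
  rw [hc2, ← hc', ← hd]
  ring

end WalkOf

/-- With the skeleton set `C`, estimates `d̃`, skeleton graph `H`, and
augmented graph `G'` as described, for every node `v` the `h`-hop distance from `s` to `v`
in the augmented graph `G'` equals the unrestricted distance:
`dist_{G'}^h(s,v) = dist_{G'}(s,v)`. -/
theorem skeleton_augmented_graph_hop_distance_eq_distance
    {V : Type*} [Fintype V]
    (E : Set (V × V)) (wG : V × V → ℕ) (s : V) (h : ℕ)
    (hh1 : 1 ≤ h) (hh2 : h ≤ Fintype.card V)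
    (C : Set V) (hC : IsSkeleton E (fun e => (wG e : ℕ∞)) s h C)
    (dtil : V → V → ℕ∞)
    (hdtil : ∀ x ∈ C, ∀ v : V,
      gdist E (fun e => (wG e : ℕ∞)) x v ≤ dtil x v ∧
      dtil x v ≤ 2 * hdist E (fun e => (wG e : ℕ∞)) h x v)
    -- the skeleton graph `H = (C, C × C, w_H)`
    (EH : Set (V × V)) (hEH : EH = C ×ˢ C)
    (wH : V × V → ℕ∞) (hwH : ∀ e ∈ EH, wH e = dtil e.1 e.2)
    -- the augmented graph `G' = (V, E ∪ {s} × C, w_{G'})`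
    (E' : Set (V × V)) (hE' : E' = E ∪ ({s} : Set V) ×ˢ C)
    (wG' : V × V → ℕ∞)
    (hw1 : ∀ e ∈ E, e ∉ ({s} : Set V) ×ˢ C → wG' e = 2 * (wG e : ℕ∞))
    (hw2 : ∀ e ∉ E, e ∈ ({s} : Set V) ×ˢ C → wG' e = gdist EH wH e.1 e.2)
    (hw3 : ∀ e ∈ E, e ∈ ({s} : Set V) ×ˢ C →
      wG' e = min (gdist EH wH e.1 e.2) (2 * (wG e : ℕ∞))) :
    ∀ v : V, hdist E' wG' h s v = gdist E' wG' s v := by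
  intro v
  set w : V × V → ℕ∞ := fun e => (wG e : ℕ∞) with hw
  refine le_antisymm ?_ (gdist_le_hdist h s v)
  by_cases hfin : gdist E' wG' s v = ⊤
  · simp [hfin]
  -- how the edges of `G'` compare with those of `G` and `H`
  have hEE : ∀ e ∈ E, e ∈ E' ∧ wG' e ≤ 2 * w e := by
    intro e he
    refine ⟨hE' ▸ Or.inl he, ?_⟩
    by_cases hs : e ∈ ({s} : Set V) ×ˢ C
    · rw [hw3 e he hs]; exact min_le_right _ _
    · rw [hw1 e he hs]
  have hCE : ∀ x ∈ C, (s, x) ∈ E' ∧ wG' (s, x) ≤ gdist EH wH s x := by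
    intro x hx
    have hs : (s, x) ∈ ({s} : Set V) ×ˢ C := ⟨rfl, hx⟩
    refine ⟨hE' ▸ Or.inr hs, ?_⟩
    by_cases he : (s, x) ∈ E
    · rw [hw3 _ he hs]; exact min_le_left _ _
    · rw [hw2 _ he hs]
  have hnot_s : ∀ a b, a ≠ s → (a, b) ∈ E' → (a, b) ∈ E ∧ wG' (a, b) = 2 * w (a, b) := by
    intro a b has hab
    have hs : (a, b) ∉ ({s} : Set V) ×ˢ C := fun hs => has hs.1
    have he : (a, b) ∈ E := by
      rw [hE'] at hab
      exact hab.resolve_right hs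
    exact ⟨he, hw1 _ he hs⟩
  have hfirst : ∀ a, (s, a) ∈ E' → (a ∈ C ∧ gdist EH wH s a ≤ wG' (s, a)) ∨
      ((s, a) ∈ E ∧ wG' (s, a) = 2 * w (s, a)) := by
    intro a ha
    by_cases hs : (s, a) ∈ ({s} : Set V) ×ˢ C
    · by_cases he : (s, a) ∈ E
      · have hmin := hw3 _ he hs
        rcases min_choice (gdist EH wH s a) (2 * (wG (s, a) : ℕ∞)) with hm | hm
        · exact .inl ⟨hs.2, (hmin.trans hm).ge⟩
        · exact .inr ⟨he, hmin.trans hm⟩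
      · exact .inl ⟨hs.2, (hw2 _ he hs).ge⟩
    · have he : (s, a) ∈ E := by
        rw [hE'] at ha
        exact ha.resolve_right hs
      exact .inr ⟨he, hw1 _ he hs⟩
  -- an edge of `H` costs at most twice any walk of `G` with at most `h` edges
  have hHedge : ∀ y ∈ C, ∀ x ∈ C, ∀ n c, WalkOf E w y x n c → n ≤ h →
      gdist EH wH s x ≤ gdist EH wH s y + 2 * c := by
    intro y hy x hx n c hW hn
    have hyx : (y, x) ∈ EH := by rw [hEH]; exact ⟨hy, hx⟩
    refine (gdist_le_add hyx).trans (add_le_add le_rfl ?_)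
    rw [hwH _ hyx]
    exact ((hdtil y hy x).2).trans (mul_le_mul_right (hW.hdist_le hn) 2)
  have hHss : gdist EH wH s s = 0 := le_antisymm (WalkOf.nil s).gdist_le zero_le
  -- a shortest walk of `G'` with as few edges as possible
  classical
  have hex := exists_walkOf_gdist hfin
  obtain ⟨n, hn, hnmin⟩ : ∃ n, WalkOf E' wG' s v n (gdist E' wG' s v) ∧
      ∀ m d, WalkOf E' wG' s v m d → d ≤ gdist E' wG' s v → n ≤ m := by
    refine ⟨Nat.find hex, Nat.find_spec hex, fun m d hm hd => Nat.find_min' hex ?_⟩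
    rwa [← le_antisymm hd hm.gdist_le]
  by_cases hnh : n ≤ h
  · exact hn.hdist_le hnh
  exfalso
  generalize hD : gdist E' wG' s v = D at hn hnmin hfin
  cases hn with
  | nil => omega
  | @cons _ a _ N c hsa hrest =>
  rcases hrest.visits_or_double hnot_s with ⟨m, d, hm, hd, hW⟩ | ⟨c0, hG, rfl⟩
  · have := hnmin m d hW (hd.trans le_add_self)
    omega
  have hf0 : wG' (s, a) ≠ ⊤ := fun ht => hfin (by simp [ht])
  have hfc0 : c0 ≠ ⊤ := fun ht => hfin (by simp [ht])
  have hmin : c0 ≤ gdist E w a v := by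
    by_cases htop : gdist E w a v = ⊤
    · simp [htop]
    obtain ⟨m, hm⟩ := exists_walkOf_gdist htop
    obtain ⟨c', hc', hle⟩ := hm.double hEE
    have h1 := (WalkOf.cons hsa hc').gdist_le
    rw [hD] at h1
    have h2 := ((ENat.add_le_add_iff_left hf0).1 h1).trans hle
    exact (ENat.mul_le_mul_left_iff (by simp) (by simp)).1 h2
  -- replacing everything up to a skeleton node `x` by the edge `(s, x)` cannot save an edge
  have hshort : ∀ x ∈ C, ∀ q e1 e2, WalkOf E w x v q e2 → e1 + e2 = c0 →
      gdist EH wH s x ≤ wG' (s, a) + 2 * e1 → N ≤ q := by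
    intro x hx q e1 e2 hW he hle
    obtain ⟨c', hc', hle'⟩ := hW.double hEE
    have := hnmin _ _ (WalkOf.cons (hCE x hx).1 hc') (by
      rw [← he, mul_add, ← add_assoc]
      exact add_le_add ((hCE x hx).2.trans hle) hle')
    omega
  have hcaseH : ¬ (a ∈ C ∧ gdist EH wH s a ≤ wG' (s, a)) := by
    rintro ⟨haC, hle⟩
    obtain ⟨x, hx, p, q, e1, e2, g1, g2, hpq, hp1, hp2, he⟩ :=
      exists_skeleton_split (i := 1) hh1 hC hG hfc0 hmin (by omega)
    have := hshort x hx q e1 e2 g2 he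
      ((hHedge a haC x hx p e1 g1 (by omega)).trans (add_le_add hle le_rfl))
    omega
  rcases hfirst a hsa with hcase | ⟨hsaE, hwsa⟩
  · exact hcaseH hcase
  obtain ⟨x, hx, p, q, e1, e2, g1, g2, hpq, hp1, hp2, he⟩ :=
    exists_skeleton_split (i := 0) hh1 hC hG hfc0 hmin (by omega)
  have hsx : gdist EH wH s x ≤ wG' (s, a) + 2 * e1 := by
    have := hHedge s hC.1 x hx _ _ (WalkOf.cons hsaE g1) (by omega)
    rwa [hHss, zero_add, mul_add, ← hwsa] at this
  have hq := hshort x hx q e1 e2 g2 he hsx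
  -- no edge is saved, so `x = a` and `(s, a)` costs at least `dist_H(s, a)`
  obtain rfl : p = 0 := by omega
  cases g1 with
  | nil => exact hcaseH ⟨hx, by simpa using hsx⟩
end
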